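/- The sum over all connected graphs G on vertex set {1,...,n} of (-1)^(e(G)) times the volume of the polytope Π_G equals (-1)^(n-1)·n^(n-1), where Π_G = { (x_2,...,x_n) ∈ ℝ^(n-1) : |x_i - x_j| < 1 for all edges {i,j} of G }, with x_1 = 0. -/

import Mathlib

open scoped Classical
open MeasureTheory

/-- The polytope `Π_G` associated with a graph `G` on `{1, ..., n+1}`:
points `(x_2, ..., x_{n+1}) ∈ ℝ^n` with `x_1 := 0` and `|x_i - x_j| < 1`
for every edge `{i,j}` of `G`. -/
def graphPolytope (n : ℕ) (G : SimpleGraph (Fin (n + 1))) : Set (Fin n → ℝ) :=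
  {y | ∀ i j : Fin (n + 1), G.Adj i j →
    |(Fin.cons (0 : ℝ) y : Fin (n + 1) → ℝ) i - (Fin.cons (0 : ℝ) y : Fin (n + 1) → ℝ) j| < 1}

/-!
For almost every `x`, the sum of `(-1) ^ e(G)` over the connected graphs `G` with `x` in the
polytope of `G` is the linear coefficient of the chromatic polynomial of the unit interval graph
of `x`, by Whitney's subgraph expansion. Listing the points from left to right is a perfect
elimination order of that graph, so the chromatic polynomial is `∏ i, (X - b i)`, where `b i` is
the number of points in `(x i - 1, x i)`, and its linear coefficient is
`(-1) ^ n * ∑ r, ∏ i ≠ r, b i`.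

Relabelling the points preserves volume, so all `n + 1` values of `r` have the same integral. For
`r = 0` the product counts the maps `p` sending each `i ≠ 0` to a point of `(x i - 1, x i)`. The
region of configurations admitting a given `p` is the preimage of the unit cube under the matrix
`1 - N` of `x ↦ (x i - x (p i))`, and has volume `det (1 - N)`: both are `1` if the region is
nonempty, since ordering the indices by the position of their points makes `N` strictly triangular,
and both are `0` if it is empty, since `1 - N` is then not surjective. Determinants being linear in
each row, the sum over `p` is the determinant of `(n + 1) I - J`, with `J` the all-ones matrix,
which is `(n + 1) ^ (n - 1)`.
-/

open Finset Polynomial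

section Whitney

variable {V α : Type*}

theorem eq_of_reachable_of_forall_adj {G : SimpleGraph V} {f : V → α}
    (hf : ∀ u v, G.Adj u v → f u = f v) {u v : V} (h : G.Reachable u v) : f u = f v := by
  obtain ⟨p⟩ := h
  induction p with
  | nil => rfl
  | cons huv _ ih => exact (hf _ _ huv).trans ih

variable (α) in
/-- Functions that are constant along the edges of `G` correspond to functions on its connected
components. -/
def constOnAdjEquiv (G : SimpleGraph V) :
    {f : V → α // ∀ u v, G.Adj u v → f u = f v} ≃ (G.ConnectedComponent → α) where
  toFun f := SimpleGraph.ConnectedComponent.lift f.1 fun _ _ p _ =>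
    eq_of_reachable_of_forall_adj f.2 p.reachable
  invFun g := ⟨fun v => g (G.connectedComponentMk v), fun _ _ h =>
    congrArg g (SimpleGraph.ConnectedComponent.sound h.reachable)⟩
  left_inv _ := rfl
  right_inv _ := funext fun c => c.ind fun _ => rfl

/-- The subgraph of `U` formed by the edges whose two ends get the same colour under `f`. -/
def monochromaticSubgraph (U : SimpleGraph V) (f : V → α) : SimpleGraph V :=
  U \ (⊤ : SimpleGraph α).comap f

theorem le_monochromaticSubgraph_iff {G U : SimpleGraph V} {f : V → α} :
    G ≤ monochromaticSubgraph U f ↔ G ≤ U ∧ ∀ u v, G.Adj u v → f u = f v := by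
  simp only [SimpleGraph.le_iff_adj, monochromaticSubgraph, SimpleGraph.sdiff_adj,
    SimpleGraph.comap_adj, SimpleGraph.top_adj, not_not]
  grind

theorem monochromaticSubgraph_eq_bot_iff {U : SimpleGraph V} {f : V → α} :
    monochromaticSubgraph U f = ⊥ ↔ ∀ u v, U.Adj u v → f u ≠ f v := by
  rw [monochromaticSubgraph, sdiff_eq_bot_iff, SimpleGraph.le_iff_adj]
  rfl

theorem card_connectedComponent_eq_one_iff (G : SimpleGraph V) :
    Nat.card G.ConnectedComponent = 1 ↔ G.Connected := by
  rw [Nat.card_eq_one_iff_exists, SimpleGraph.connected_iff_exists_forall_reachable]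
  simp only [SimpleGraph.ConnectedComponent.exists, SimpleGraph.ConnectedComponent.forall,
    SimpleGraph.ConnectedComponent.eq, SimpleGraph.reachable_comm]

variable [Fintype V] [DecidableEq V]

theorem sum_neg_one_pow_card_edgeSet_of_le (U : SimpleGraph V) :
    ∑ G : SimpleGraph V with G ≤ U, (-1 : ℤ) ^ Nat.card G.edgeSet = if U = ⊥ then 1 else 0 := by
  have h_edges : ∑ G : SimpleGraph V with G ≤ U, (-1 : ℤ) ^ Nat.card G.edgeSet =
      ∑ t ∈ U.edgeFinset.powerset, (-1 : ℤ) ^ #t := by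
    refine sum_nbij' (fun G => G.edgeFinset) (fun t => SimpleGraph.fromEdgeSet t)
      (fun G hG => by simpa using hG) (fun t ht => ?_) (fun G _ => by simp) (fun t ht => ?_)
      (fun G _ => by rw [Nat.card_eq_fintype_card, SimpleGraph.edgeFinset_card])
    · rw [mem_filter_univ, SimpleGraph.fromEdgeSet_le]
      grind [SimpleGraph.mem_edgeFinset]
    · ext e
      have h_loopless : e ∈ t → ¬ e.IsDiag := fun he =>
        U.not_isDiag_of_mem_edgeFinset (mem_powerset.1 ht he)
      simpa using h_loopless
  simp only [h_edges, sum_powerset_neg_one_pow_card, SimpleGraph.edgeFinset_eq_empty]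

theorem card_coloring_eq_card_filter [Fintype α] (U : SimpleGraph V) :
    Nat.card (U.Coloring α) = #{f : V → α | ∀ u v, U.Adj u v → f u ≠ f v} := by
  rw [← Nat.subtype_card _ fun f => mem_filter_univ f]
  exact Nat.card_congr ⟨fun c => ⟨c, fun _ _ => c.valid⟩, fun f => .mk f.1 (f.2 _ _),
    fun _ => rfl, fun _ => rfl⟩

theorem card_filter_eq_pow_card_connectedComponent [Fintype α] (G : SimpleGraph V) :
    #{f : V → α | ∀ u v, G.Adj u v → f u = f v} =
      Nat.card α ^ Nat.card G.ConnectedComponent := by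
  rw [← Nat.subtype_card _ fun f => mem_filter_univ f, ← Nat.card_fun]
  exact Nat.card_congr (constOnAdjEquiv α G)

/-- The chromatic polynomial of a finite graph, defined by Whitney's expansion over its spanning
subgraphs. -/
noncomputable def chromaticPolynomial (U : SimpleGraph V) : ℤ[X] :=
  ∑ G : SimpleGraph V with G ≤ U,
    C ((-1) ^ Nat.card G.edgeSet) * X ^ Nat.card G.ConnectedComponent

theorem eval_chromaticPolynomial_card [Finite α] (U : SimpleGraph V) :
    (chromaticPolynomial U).eval (Nat.card α : ℤ) = Nat.card (U.Coloring α) := by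
  have := Fintype.ofFinite α
  calc (chromaticPolynomial U).eval (Nat.card α : ℤ)
      = ∑ G : SimpleGraph V with G ≤ U, ∑ f : V → α,
          if ∀ u v, G.Adj u v → f u = f v then (-1) ^ Nat.card G.edgeSet else 0 := by
        simp only [chromaticPolynomial, eval_finsetSum, eval_mul, eval_C, eval_pow, eval_X,
          ← sum_filter, sum_const, card_filter_eq_pow_card_connectedComponent, nsmul_eq_mul,
          mul_comm, Nat.cast_pow]
    _ = ∑ f : V → α, ∑ G : SimpleGraph V with G ≤ monochromaticSubgraph U f,
          (-1) ^ Nat.card G.edgeSet := by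
        rw [sum_comm]
        simp only [le_monochromaticSubgraph_iff, ← sum_filter, filter_filter]
    _ = ∑ f : V → α, if ∀ u v, U.Adj u v → f u ≠ f v then 1 else 0 := by
        simp only [sum_neg_one_pow_card_edgeSet_of_le, monochromaticSubgraph_eq_bot_iff]
    _ = Nat.card (U.Coloring α) := by
        rw [sum_boole, card_coloring_eq_card_filter]

theorem coeff_one_chromaticPolynomial (U : SimpleGraph V) :
    (chromaticPolynomial U).coeff 1 =
      ∑ G : SimpleGraph V with G.Connected ∧ G ≤ U, (-1) ^ Nat.card G.edgeSet := by
  simp only [chromaticPolynomial, finsetSum_coeff, coeff_C_mul_X_pow, @eq_comm ℕ 1,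
    card_connectedComponent_eq_one_iff, ← sum_filter, filter_filter, and_comm]

end Whitney

theorem coeff_one_prod_X_sub_C {R ι : Type*} [CommRing R] [DecidableEq ι] (s : Finset ι)
    (a : ι → R) :
    (∏ i ∈ s, (X - C (a i))).coeff 1 = ∑ r ∈ s, ∏ i ∈ s.erase r, -a i := by
  have h := coeff_derivative (∏ i ∈ s, (X - C (a i))) 0
  rw [derivative_prod_finset] at h
  simpa [coeff_zero_eq_eval_zero, eval_finsetSum, eval_prod] using h.symm

section PerfectElimination

variable {V α β : Type*}

variable (α) in
/-- A colouring of `U` is a colouring of the graph with `v` deleted together with a colour for `v`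
that is not used on the neighbours of `v`. -/
noncomputable def coloringEquivSigma (U : SimpleGraph V) (v : V) :
    U.Coloring α ≃ Σ c : (U.induce {v}ᶜ).Coloring α,
      ((Set.range fun u : U.neighborSet v => c ⟨u, u.2.ne'⟩)ᶜ : Set α) where
  toFun c := ⟨c.comap (SimpleGraph.Embedding.induce _).toHom, c v, by
    rintro ⟨u, hu⟩
    exact c.valid u.2 hu.symm⟩
  invFun p := .mk (fun u => if h : u = v then p.2 else p.1 ⟨u, h⟩) fun {u w} h_adj => by
    have h_new (w : U.neighborSet v) : (p.2 : α) ≠ p.1 ⟨w, w.2.ne'⟩ :=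
      fun h => p.2.2 ⟨w, h.symm⟩
    have h_old {u w : ({v}ᶜ : Set V)} (h : U.Adj u w) : p.1 u ≠ p.1 w := p.1.valid h
    split_ifs with hu hw hw
    · exact (h_adj.ne (hu.trans hw.symm)).elim
    · exact h_new ⟨w, hu ▸ h_adj⟩
    · exact (h_new ⟨u, hw ▸ h_adj.symm⟩).symm
    · exact h_old h_adj
  left_inv c := by
    ext u
    by_cases h : u = v <;> simp [SimpleGraph.Coloring.mk, h]
  right_inv p := Sigma.subtype_ext (RelHom.ext fun u => dif_neg u.2) (dif_pos rfl)

theorem card_coloring_eq_mul_of_isClique_neighborSet [Finite V] [Finite α] {U : SimpleGraph V}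
    {v : V} (hv : U.IsClique (U.neighborSet v)) :
    (Nat.card (U.Coloring α) : ℤ) =
      (Nat.card α - (U.neighborSet v).ncard) * Nat.card ((U.induce {v}ᶜ).Coloring α) := by
  have := Fintype.ofFinite V
  have := Fintype.ofFinite α
  have h_fiber (c : (U.induce {v}ᶜ).Coloring α) :
      (Nat.card ((Set.range fun u : U.neighborSet v => c ⟨u, u.2.ne'⟩)ᶜ : Set α) : ℤ) =
        Nat.card α - (U.neighborSet v).ncard := by
    have h_inj : Function.Injective fun u : U.neighborSet v => c ⟨u, u.2.ne'⟩ :=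
      c.injective_comp_of_pairwise_adj (fun u : U.neighborSet v => ⟨u, u.2.ne'⟩)
        fun u w huw => hv u.2 w.2 (Subtype.coe_injective.ne huw)
    rw [Nat.card_coe_set_eq, eq_sub_iff_add_eq, ← Nat.card_coe_set_eq (U.neighborSet v),
      ← Set.ncard_range_of_injective h_inj, ← Nat.cast_add, add_comm, Set.ncard_add_ncard_compl]
  rw [Nat.card_congr (coloringEquivSigma α U v), Nat.card_sigma, Nat.cast_sum,
    sum_congr rfl fun c _ => h_fiber c, sum_const, card_univ, nsmul_eq_mul, mul_comm,
    Nat.card_eq_fintype_card (α := (U.induce {v}ᶜ).Coloring α)]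

/-- The neighbours of `v` that precede it in the ordering of the vertices by their value under
`f`. -/
def lowerNeighborSet [LT β] (U : SimpleGraph V) (f : V → β) (v : V) : Set V :=
  {u | U.Adj v u ∧ f u < f v}

theorem image_lowerNeighborSet_induce [LT β] (U : SimpleGraph V) (f : V → β)
    {s : Set V} (hs : ∀ v ∈ s, lowerNeighborSet U f v ⊆ s) (v : s) :
    (↑) '' lowerNeighborSet (U.induce s) (f ∘ (↑)) v = lowerNeighborSet U f v := by
  ext u
  constructor
  · rintro ⟨u, hu, rfl⟩
    exact hu
  · exact fun hu => ⟨⟨u, hs v v.2 hu⟩, hu, rfl⟩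

theorem card_coloring_eq_prod_of_isClique_lowerNeighborSet [LinearOrder β] [Fintype V]
    [Finite α] {U : SimpleGraph V} (f : U.Coloring β)
    (hf : ∀ v, U.IsClique (lowerNeighborSet U f v)) :
    (Nat.card (U.Coloring α) : ℤ) = ∏ v, (Nat.card α - (lowerNeighborSet U f v).ncard : ℤ) := by
  induction h_card : Fintype.card V generalizing V with
  | zero =>
    have := Fintype.card_eq_zero_iff.1 h_card
    rw [Fintype.prod_empty, Nat.cast_eq_one, Nat.card_eq_one_iff_exists]
    exact ⟨.ofIsEmpty, fun _ => RelHom.ext isEmptyElim⟩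
  | succ m ih =>
    have : Nonempty V := Fintype.card_pos_iff.1 (by omega)
    obtain ⟨v, hv⟩ := Finite.exists_max f
    have h_top : U.neighborSet v = lowerNeighborSet U f v := by
      ext u
      exact (and_iff_left_of_imp fun huv => (hv u).lt_of_ne (f.valid huv).symm).symm
    have h_lower : ∀ w ∈ ({v}ᶜ : Set V), lowerNeighborSet U f w ⊆ {v}ᶜ := by
      rintro w - _ hu rfl
      exact (hv w).not_gt hu.2
    have h_image := image_lowerNeighborSet_induce U f h_lower
    have h_rest := ih (f.comap (SimpleGraph.Embedding.induce {v}ᶜ).toHom)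
      (fun w u hu u' hu' huu' => hf w (h_image w ▸ Set.mem_image_of_mem _ hu)
        (h_image w ▸ Set.mem_image_of_mem _ hu') (Subtype.coe_injective.ne huu'))
      (by rw [Fintype.card_compl_set, h_card, Set.card_singleton, Nat.add_sub_cancel])
    rw [card_coloring_eq_mul_of_isClique_neighborSet (h_top ▸ hf v), h_top, h_rest,
      Fintype.prod_eq_mul_prod_subtype_ne _ v]
    congr 1
    refine Fintype.prod_congr _ _ fun w => ?_
    rw [← h_image, Set.ncard_image_of_injective _ Subtype.coe_injective]
    rfl

theorem chromaticPolynomial_eq_prod_of_isClique_lowerNeighborSet [Fintype V] [DecidableEq V]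
    [LinearOrder β] {U : SimpleGraph V} (f : U.Coloring β)
    (hf : ∀ v, U.IsClique (lowerNeighborSet U f v)) :
    chromaticPolynomial U = ∏ v, (X - C ((lowerNeighborSet U f v).ncard : ℤ)) := by
  refine eq_of_infinite_eval_eq _ _ <|
    (Set.infinite_range_of_injective Nat.cast_injective).mono ?_
  rintro _ ⟨q, rfl⟩
  have h_eval := eval_chromaticPolynomial_card (α := Fin q) U
  rw [card_coloring_eq_prod_of_isClique_lowerNeighborSet f hf, Nat.card_fin] at h_eval
  simpa [eval_prod] using h_eval

end PerfectElimination

section UnitInterval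

variable {V : Type*}

/-- The unit interval graph of the points `x i` on the line, with open intervals: `i` and `j` are
adjacent when `x i` and `x j` are less than `1` apart. -/
def unitIntervalGraph (x : V → ℝ) : SimpleGraph V where
  Adj i j := i ≠ j ∧ |x i - x j| < 1
  symm := ⟨fun i j h => ⟨h.1.symm, abs_sub_comm (x i) (x j) ▸ h.2⟩⟩
  loopless := ⟨fun _ h => h.1 rfl⟩

/-- The indices of the points lying strictly between `x i - 1` and `x i`. -/
def pointsBelow (x : V → ℝ) (i : V) : Set V :=
  {j | x i - x j ∈ Set.Ioo 0 1}

theorem lowerNeighborSet_unitIntervalGraph (x : V → ℝ) (i : V) :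
    lowerNeighborSet (unitIntervalGraph x) x i = pointsBelow x i := by
  ext j
  constructor
  · rintro ⟨⟨-, h_near⟩, h_lt⟩
    exact ⟨sub_pos.2 h_lt, (abs_lt.1 h_near).2⟩
  · rintro ⟨h_pos, h_lt⟩
    have h_ne : i ≠ j := by
      rintro rfl
      simp at h_pos
    exact ⟨⟨h_ne, by rwa [abs_of_pos h_pos]⟩, sub_pos.1 h_pos⟩

theorem isClique_pointsBelow (x : V → ℝ) (i : V) :
    (unitIntervalGraph x).IsClique (pointsBelow x i) := by
  rintro j ⟨hj_pos, hj_lt⟩ k ⟨hk_pos, hk_lt⟩ h_ne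
  exact ⟨h_ne, abs_lt.2 ⟨by linarith, by linarith⟩⟩

variable [Fintype V] [DecidableEq V]

theorem chromaticPolynomial_unitIntervalGraph {x : V → ℝ} (hx : Function.Injective x) :
    chromaticPolynomial (unitIntervalGraph x) = ∏ i, (X - C ((pointsBelow x i).ncard : ℤ)) := by
  have h_elim := chromaticPolynomial_eq_prod_of_isClique_lowerNeighborSet
    (U := unitIntervalGraph x) (.mk x fun h => hx.ne h.1)
  simp only [SimpleGraph.Coloring.mk, RelHom.coeFn_mk, lowerNeighborSet_unitIntervalGraph] at h_elim
  exact h_elim (isClique_pointsBelow x)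

/-- The number of maps `p` on the indices `i ≠ r` such that `x (p i)` always lies strictly between
`x i - 1` and `x i`. -/
noncomputable def parentChoices (x : V → ℝ) (r : V) : ℕ :=
  ∏ i ∈ univ.erase r, (pointsBelow x i).ncard

theorem sum_connected_le_unitIntervalGraph {x : V → ℝ} (hx : Function.Injective x) :
    ∑ G : SimpleGraph V with G.Connected ∧ G ≤ unitIntervalGraph x,
        (-1 : ℤ) ^ Nat.card G.edgeSet =
      (-1) ^ (Fintype.card V - 1) * ∑ r, (parentChoices x r : ℤ) := by
  rw [← coeff_one_chromaticPolynomial, chromaticPolynomial_unitIntervalGraph hx,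
    coeff_one_prod_X_sub_C, mul_sum]
  refine sum_congr rfl fun r _ => ?_
  rw [prod_neg, card_erase_of_mem (mem_univ r), card_univ, parentChoices, Nat.cast_prod]

theorem parentChoices_sub_const (x : V → ℝ) (c : ℝ) (r : V) :
    parentChoices (fun i => x i - c) r = parentChoices x r := by
  simp only [parentChoices, pointsBelow, sub_sub_sub_cancel_right]

theorem parentChoices_comp_perm (x : V → ℝ) (σ : Equiv.Perm V) (r : V) :
    parentChoices (x ∘ σ) r = parentChoices x (σ r) := by
  refine prod_equiv σ (by simp) fun i _ => ?_
  exact Set.ncard_preimage_of_injective_subset_range (s := pointsBelow x (σ i)) σ.injective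
    (by simp)

end UnitInterval

section Anchor

variable {n : ℕ}

/-- The `n + 1` points on the line of which the one with index `0` is the origin and the others are
the coordinates of `y`. -/
def anchor : (Fin n → ℝ) →ₗ[ℝ] (Fin (n + 1) → ℝ) :=
  LinearMap.vecCons 0 LinearMap.id

@[simp]
theorem anchor_zero (y : Fin n → ℝ) : anchor y 0 = 0 := rfl

@[simp]
theorem anchor_succ (y : Fin n → ℝ) (i : Fin n) : anchor y i.succ = y i := rfl

/-- The positions of the points `x 1, …, x n` relative to `x 0`; a left inverse of `anchor`. -/
def displacement : (Fin (n + 1) → ℝ) →ₗ[ℝ] (Fin n → ℝ) where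
  toFun x i := x i.succ - x 0
  map_add' x y := funext fun i => add_sub_add_comm (x i.succ) (y i.succ) (x 0) (y 0)
  map_smul' c x := funext fun i => (mul_sub c (x i.succ) (x 0)).symm

theorem anchor_displacement (x : Fin (n + 1) → ℝ) :
    anchor (displacement x) = fun i => x i - x 0 := by
  ext i
  cases i using Fin.cases with
  | zero => simp
  | succ i => rfl

theorem displacement_anchor (y : Fin n → ℝ) : displacement (anchor y) = y := by
  ext i
  simp [displacement]

theorem displacement_sub_const (x : Fin (n + 1) → ℝ) (c : ℝ) :
    displacement (fun i => x i - c) = displacement x := by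
  ext i
  simp [displacement]

/-- The action of permutations on anchored configurations: permute the points and translate so that
the new point `0` is the origin. The inverse permutation makes this a left action. -/
def permAction : Equiv.Perm (Fin (n + 1)) →* Module.End ℝ (Fin n → ℝ) where
  toFun σ := displacement ∘ₗ LinearMap.funLeft ℝ ℝ σ.symm ∘ₗ anchor
  map_one' := LinearMap.ext displacement_anchor
  map_mul' σ τ := LinearMap.ext fun y => by
    change displacement (anchor y ∘ (σ * τ).symm) =
      displacement (anchor (displacement (anchor y ∘ τ.symm)) ∘ σ.symm)
    rw [anchor_displacement]
    exact (displacement_sub_const _ _).symm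

theorem anchor_permAction (σ : Equiv.Perm (Fin (n + 1))) (y : Fin n → ℝ) :
    anchor (permAction σ y) = fun i => anchor y (σ.symm i) - anchor y (σ.symm 0) :=
  anchor_displacement _

theorem parentChoices_anchor_permAction (σ : Equiv.Perm (Fin (n + 1))) (y : Fin n → ℝ)
    (r : Fin (n + 1)) :
    parentChoices (anchor (permAction σ y)) r = parentChoices (anchor y) (σ.symm r) := by
  rw [anchor_permAction]
  exact (parentChoices_sub_const (anchor y ∘ σ.symm) _ r).trans
    (parentChoices_comp_perm (anchor y) σ.symm r)

theorem abs_det_eq_one_of_isOfFinOrder {E : Type*} [AddCommGroup E] [Module ℝ E]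
    {f : Module.End ℝ E} (hf : IsOfFinOrder f) : |LinearMap.det f| = 1 :=
  (LinearMap.det.isOfFinOrder hf).norm_eq_one

theorem measurePreserving_of_isOfFinOrder {E : Type*} [NormedAddCommGroup E] [NormedSpace ℝ E]
    [FiniteDimensional ℝ E] [MeasurableSpace E] [BorelSpace E] (μ : Measure E) [μ.IsAddHaarMeasure]
    {f : Module.End ℝ E} (hf : IsOfFinOrder f) : MeasurePreserving f μ μ := by
  have h_det := abs_det_eq_one_of_isOfFinOrder hf
  refine ⟨(LinearMap.continuous_of_finiteDimensional f).measurable, ?_⟩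
  have h_ne : LinearMap.det f ≠ 0 := by
    rw [← abs_ne_zero, h_det]
    exact one_ne_zero
  rw [Measure.map_linearMap_addHaar_eq_smul_addHaar μ h_ne, abs_inv, h_det, inv_one,
    ENNReal.ofReal_one, one_smul]

theorem measurePreserving_permAction (σ : Equiv.Perm (Fin (n + 1))) :
    MeasurePreserving (permAction σ) :=
  measurePreserving_of_isOfFinOrder volume (permAction.isOfFinOrder (isOfFinOrder_of_finite σ))

theorem measurableEmbedding_permAction (σ : Equiv.Perm (Fin (n + 1))) :
    MeasurableEmbedding (permAction σ) := by
  have h_inv : permAction σ⁻¹ ∘ₗ permAction σ = LinearMap.id := by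
    rw [← Module.End.mul_eq_comp, ← map_mul, inv_mul_cancel, map_one]
    rfl
  have h_ker : LinearMap.ker (permAction σ) = ⊥ := LinearMap.ker_eq_bot_of_inverse h_inv
  exact (LinearMap.isClosedEmbedding_of_injective h_ker).measurableEmbedding

end Anchor

theorem sum_det_eq_det_sum_row {R m ι : Type*} [CommRing R] [Fintype m] [DecidableEq m]
    [Fintype ι] (M : m → ι → m → R) :
    ∑ p : m → ι, (Matrix.of fun i => M i (p i)).det = (Matrix.of fun i => ∑ c, M i c).det :=
  (Matrix.detRowAlternating.toMultilinearMap.map_sum M).symm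

theorem mul_det_scalar_sub_of_one {R m : Type*} [CommRing R] [Fintype m] [DecidableEq m] (a : R) :
    a * (Matrix.scalar m a - Matrix.of fun _ _ => 1).det =
      a ^ Fintype.card m * (a - Fintype.card m) := by
  have h_ones : (Matrix.of fun _ _ => 1 : Matrix m m R) = Matrix.vecMulVec 1 1 := by
    ext
    simp [Matrix.vecMulVec_apply]
  have h_dot : dotProduct (1 : m → R) 1 = Fintype.card m := by simp [dotProduct]
  rw [h_ones, ← Matrix.eval_charpoly, Matrix.charpoly_vecMulVec, h_dot]
  cases Fintype.card m with
  | zero => simp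
  | succ k =>
    simp only [eval_sub, eval_pow, eval_X, eval_smul, smul_eq_mul, Nat.add_sub_cancel]
    ring

theorem det_one_sub_eq_one_of_lt {R m β : Type*} [CommRing R] [Fintype m] [DecidableEq m]
    [LinearOrder β] {N : Matrix m m R} (b : m → β) (hN : ∀ i j, N i j ≠ 0 → b j < b i) :
    (1 - N).det = 1 := by
  have h_zero {i j : m} (hij : b i ≤ b j) : N i j = 0 :=
    not_not.1 fun h => (hN i j h).not_ge hij
  have h_triangular : (1 - N).BlockTriangular (OrderDual.toDual ∘ b) := fun i j hij => by
    have h_lt : b i < b j := hij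
    rw [Matrix.sub_apply, h_zero h_lt.le, Matrix.one_apply_ne (ne_of_apply_ne b h_lt.ne), sub_zero]
  rw [h_triangular.det]
  refine prod_eq_one fun a _ => ?_
  suffices (1 - N).toSquareBlock (OrderDual.toDual ∘ b) a = 1 by rw [this, Matrix.det_one]
  ext ⟨i, hi⟩ ⟨j, hj⟩
  have h_eq : b i = b j := hi.trans hj.symm
  simp [Matrix.toSquareBlock_def, h_zero h_eq.le, Matrix.one_apply]

section ParentPolytope

variable {n : ℕ}

/-- The matrix sending `y` to the positions of the points `p i` in the configuration `anchor y`.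
Index `i : Fin n` stands for the point `i.succ`, so row `i` is zero when `p i = 0`. -/
def parentMatrix (p : Fin n → Fin (n + 1)) : Matrix (Fin n) (Fin n) ℝ :=
  Matrix.of fun i j => if p i = j.succ then 1 else 0

theorem mul_sum_det_one_sub_parentMatrix (n : ℕ) :
    (n + 1 : ℝ) * ∑ p : Fin n → Fin (n + 1), (1 - parentMatrix p).det = (n + 1 : ℝ) ^ n := by
  have h_rows : (Matrix.of fun (i : Fin n) => ∑ c : Fin (n + 1), fun j : Fin n =>
      (1 : Matrix (Fin n) (Fin n) ℝ) i j - if c = j.succ then 1 else 0) =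
      Matrix.scalar (Fin n) (n + 1 : ℝ) - Matrix.of fun _ _ => 1 := by
    ext i j
    simp [Finset.sum_apply, Matrix.one_apply, Matrix.diagonal_apply]
  have h_det := sum_det_eq_det_sum_row fun (i : Fin n) (c : Fin (n + 1)) (j : Fin n) =>
      (1 : Matrix (Fin n) (Fin n) ℝ) i j - if c = j.succ then 1 else 0
  calc (n + 1 : ℝ) * ∑ p : Fin n → Fin (n + 1), (1 - parentMatrix p).det
      = (n + 1 : ℝ) * (Matrix.scalar (Fin n) (n + 1 : ℝ) - Matrix.of fun _ _ => 1).det := by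
        rw [← h_rows, ← h_det]
        rfl
    _ = (n + 1 : ℝ) ^ n := by
        rw [mul_det_scalar_sub_of_one, Fintype.card_fin]
        ring

theorem one_sub_parentMatrix_mulVec (p : Fin n → Fin (n + 1)) (y : Fin n → ℝ) (i : Fin n) :
    ((1 - parentMatrix p).mulVec y) i = y i - anchor y (p i) := by
  rw [Matrix.sub_mulVec, Matrix.one_mulVec, Pi.sub_apply]
  congr 1
  cases h : p i using Fin.cases with
  | zero => simp [Matrix.mulVec, dotProduct, parentMatrix, h, (Fin.succ_ne_zero _).symm]
  | succ k => simp [Matrix.mulVec, dotProduct, parentMatrix, h]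

/-- The anchored configurations `x` in which `x (p i)` lies strictly between `x i.succ - 1` and
`x i.succ` for every `i`. -/
def parentPolytope (p : Fin n → Fin (n + 1)) : Set (Fin n → ℝ) :=
  {y | ∀ i, p i ∈ pointsBelow (anchor y) i.succ}

theorem parentPolytope_eq_preimage (p : Fin n → Fin (n + 1)) :
    parentPolytope p =
      Matrix.toLin' (1 - parentMatrix p) ⁻¹' Set.univ.pi fun _ => Set.Ioo (0 : ℝ) 1 := by
  ext y
  simp only [Set.mem_preimage, Set.mem_univ_pi, Matrix.toLin'_apply, one_sub_parentMatrix_mulVec]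
  rfl

theorem det_one_sub_parentMatrix_of_nonempty {p : Fin n → Fin (n + 1)}
    (hp : (parentPolytope p).Nonempty) : (1 - parentMatrix p).det = 1 := by
  obtain ⟨y, hy⟩ := hp
  refine det_one_sub_eq_one_of_lt y fun i j hij => ?_
  have h_parent : p i = j.succ := by
    by_contra h
    simp [parentMatrix, h] at hij
  simpa [h_parent] using (hy i).1

theorem parentPolytope_nonempty_of_det_ne_zero {p : Fin n → Fin (n + 1)}
    (hp : (1 - parentMatrix p).det ≠ 0) : (parentPolytope p).Nonempty := by
  obtain ⟨y, hy⟩ := Matrix.mulVec_surjective_iff_isUnit.2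
    ((Matrix.isUnit_iff_isUnit_det _).2 hp.isUnit) fun _ => (1 / 2 : ℝ)
  refine ⟨y, ?_⟩
  rw [parentPolytope_eq_preimage, Set.mem_preimage, Matrix.toLin'_apply, hy]
  norm_num [Set.mem_univ_pi]

theorem volume_parentPolytope (p : Fin n → Fin (n + 1)) :
    volume (parentPolytope p) = if (parentPolytope p).Nonempty then 1 else 0 := by
  split_ifs with hp
  · have h_det : LinearMap.det (Matrix.toLin' (1 - parentMatrix p)) = 1 := by
      rw [LinearMap.det_toLin', det_one_sub_parentMatrix_of_nonempty hp]
    rw [parentPolytope_eq_preimage,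
      Measure.addHaar_preimage_linearMap _ (h_det ▸ one_ne_zero), h_det, Real.volume_pi_Ioo]
    simp
  · rw [Set.not_nonempty_iff_eq_empty.1 hp, measure_empty]

theorem measureReal_parentPolytope (p : Fin n → Fin (n + 1)) :
    volume.real (parentPolytope p) = (1 - parentMatrix p).det := by
  rw [Measure.real, volume_parentPolytope]
  split_ifs with hp
  · rw [det_one_sub_parentMatrix_of_nonempty hp, ENNReal.toReal_one]
  · rw [ENNReal.toReal_zero, not_not.1 (mt parentPolytope_nonempty_of_det_ne_zero hp)]

theorem measurableSet_parentPolytope (p : Fin n → Fin (n + 1)) :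
    MeasurableSet (parentPolytope p) := by
  rw [parentPolytope_eq_preimage]
  exact (LinearMap.continuous_of_finiteDimensional _).measurable
    (MeasurableSet.univ_pi fun _ => measurableSet_Ioo)

theorem integrable_indicator_parentPolytope (p : Fin n → Fin (n + 1)) :
    Integrable ((parentPolytope p).indicator (1 : (Fin n → ℝ) → ℝ)) := by
  refine (integrable_indicator_iff (measurableSet_parentPolytope p)).2 (integrableOn_const ?_)
  rw [volume_parentPolytope]
  split_ifs <;> simp

theorem parentChoices_anchor_zero (y : Fin n → ℝ) :
    (parentChoices (anchor y) 0 : ℝ) =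
      ∑ p : Fin n → Fin (n + 1), (parentPolytope p).indicator 1 y := by
  have h_card : parentChoices (anchor y) 0 =
      #{p : Fin n → Fin (n + 1) | y ∈ parentPolytope p} := by
    rw [parentChoices, ← compl_singleton, ← Fin.image_succ_univ,
      prod_image (Fin.succ_injective n).injOn]
    simp only [← Nat.card_coe_set_eq]
    rw [← Nat.card_pi, ← Nat.subtype_card _ fun p => mem_filter_univ p]
    exact Nat.card_congr Equiv.subtypePiEquivPi.symm
  rw [h_card]
  simp [Set.indicator_apply]

theorem parentChoices_anchor_eq_permAction_swap (y : Fin n → ℝ) (r : Fin (n + 1)) :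
    parentChoices (anchor y) r = parentChoices (anchor (permAction (Equiv.swap 0 r) y)) 0 := by
  rw [parentChoices_anchor_permAction, Equiv.symm_swap, Equiv.swap_apply_left]

theorem integrable_parentChoices_anchor (r : Fin (n + 1)) :
    Integrable fun y : Fin n → ℝ => (parentChoices (anchor y) r : ℝ) := by
  simp only [parentChoices_anchor_eq_permAction_swap _ r, parentChoices_anchor_zero]
  exact (measurePreserving_permAction _).integrable_comp_of_integrable
    (integrable_finsetSum _ fun p _ => integrable_indicator_parentPolytope p)

theorem integral_parentChoices_anchor (r : Fin (n + 1)) :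
    ∫ y : Fin n → ℝ, (parentChoices (anchor y) r : ℝ) =
      ∑ p : Fin n → Fin (n + 1), (1 - parentMatrix p).det := by
  simp only [parentChoices_anchor_eq_permAction_swap _ r]
  rw [(measurePreserving_permAction _).integral_comp (measurableEmbedding_permAction _)
    fun y => (parentChoices (anchor y) 0 : ℝ)]
  simp only [parentChoices_anchor_zero]
  rw [integral_finsetSum _ fun p _ => integrable_indicator_parentPolytope p]
  simp only [integral_indicator_one (measurableSet_parentPolytope _), measureReal_parentPolytope]

end ParentPolytope

theorem dist_le_walk_length_mul {V E : Type*} [PseudoMetricSpace E] {G : SimpleGraph V} {f : V → E}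
    {C : ℝ} (hf : ∀ u v, G.Adj u v → dist (f u) (f v) ≤ C) {u v : V} (w : G.Walk u v) :
    dist (f u) (f v) ≤ w.length * C := by
  induction w with
  | nil => simp
  | @cons u v w huv p ih =>
    rw [SimpleGraph.Walk.length_cons, Nat.cast_add_one]
    linarith [dist_triangle (f u) (f v) (f w), hf u v huv]

section GraphPolytope

variable {n : ℕ}

theorem mem_graphPolytope_iff (G : SimpleGraph (Fin (n + 1))) (y : Fin n → ℝ) :
    y ∈ graphPolytope n G ↔ G ≤ unitIntervalGraph (anchor y) :=
  ⟨fun h i j hij => ⟨hij.ne, h i j hij⟩, fun h _ _ hij => (h hij).2⟩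

theorem measurableSet_graphPolytope (G : SimpleGraph (Fin (n + 1))) :
    MeasurableSet (graphPolytope n G) := by
  have h_anchor : Measurable (anchor (n := n)) :=
    (LinearMap.continuous_of_finiteDimensional _).measurable
  have h_coord (i : Fin (n + 1)) : Measurable fun y : Fin n → ℝ => anchor y i :=
    (measurable_pi_apply i).comp h_anchor
  simp only [graphPolytope, Set.ofPred_forall]
  exact .iInter fun i => .iInter fun j => .iInter fun _ =>
    measurableSet_lt ((h_coord i).sub (h_coord j)).abs measurable_const

theorem isBounded_graphPolytope {G : SimpleGraph (Fin (n + 1))} (hG : G.Connected) :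
    Bornology.IsBounded (graphPolytope n G) := by
  let w (i : Fin n) : G.Walk i.succ 0 := (hG.preconnected i.succ 0).some
  refine (Bornology.IsBounded.pi fun i =>
    Metric.isBounded_closedBall (x := (0 : ℝ)) (r := (w i).length)).subset fun y hy i _ => ?_
  have h_dist := dist_le_walk_length_mul (f := anchor y) (fun u v huv => (hy u v huv).le) (w i)
  rwa [anchor_succ, anchor_zero, mul_one] at h_dist

theorem integrable_indicator_graphPolytope {G : SimpleGraph (Fin (n + 1))} (hG : G.Connected) :
    Integrable ((graphPolytope n G).indicator (1 : (Fin n → ℝ) → ℝ)) :=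
  (integrable_indicator_iff (measurableSet_graphPolytope G)).2
    (integrableOn_const (isBounded_graphPolytope hG).measure_lt_top.ne)

theorem ae_injective_anchor (n : ℕ) : ∀ᵐ y : Fin n → ℝ, Function.Injective (anchor y) := by
  have h_ne (i j : Fin (n + 1)) (hij : i ≠ j) : ∀ᵐ y : Fin n → ℝ, anchor y i ≠ anchor y j := by
    let S : Submodule ℝ (Fin n → ℝ) :=
      LinearMap.eqLocus (LinearMap.proj i ∘ₗ anchor) (LinearMap.proj j ∘ₗ anchor)
    have hS : S ≠ ⊤ := by
      intro h_top
      have h_mem : displacement (Pi.single i 1) ∈ S := h_top ▸ Submodule.mem_top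
      have h_eq : anchor (displacement (Pi.single i (1 : ℝ))) i =
        anchor (displacement (Pi.single i (1 : ℝ))) j := h_mem
      simp [anchor_displacement, hij] at h_eq
    exact measure_eq_zero_iff_ae_notMem.1 (Measure.addHaar_submodule volume S hS)
  simp only [← ae_all_iff] at h_ne
  filter_upwards [h_ne] with y hy i j h_eq
  exact not_imp_not.1 (hy i j) h_eq

theorem sum_connected_mul_volume_graphPolytope (w : SimpleGraph (Fin (n + 1)) → ℝ) :
    ∑ G with G.Connected, w G * volume.real (graphPolytope n G) =
      ∫ y : Fin n → ℝ, ∑ G with G.Connected ∧ G ≤ unitIntervalGraph (anchor y), w G := by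
  calc ∑ G with G.Connected, w G * volume.real (graphPolytope n G)
      = ∑ G with G.Connected, ∫ y, w G * (graphPolytope n G).indicator 1 y := by
        simp only [integral_const_mul, integral_indicator_one (measurableSet_graphPolytope _)]
    _ = ∫ y, ∑ G with G.Connected, w G * (graphPolytope n G).indicator 1 y :=
        (integral_finsetSum _ fun G hG =>
          (integrable_indicator_graphPolytope (mem_filter_univ G |>.1 hG)).const_mul _).symm
    _ = ∫ y : Fin n → ℝ, ∑ G with G.Connected ∧ G ≤ unitIntervalGraph (anchor y), w G := by
        simp only [Set.indicator_apply, mem_graphPolytope_iff, Pi.one_apply, mul_ite, mul_one,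
          mul_zero, ← sum_filter, filter_filter]

end GraphPolytope

/-- The sum over all connected graphs `G` on a vertex set of size `n+1` of
`(-1)^(e(G))` times the volume of `Π_G` equals `(-1)^n * (n+1)^n`
(i.e. `(-1)^(m-1) * m^(m-1)` for `m = n+1` vertices). -/
theorem connected_polytope_alternating_sum (n : ℕ) :
    ∑ G ∈ Finset.univ.filter (fun G : SimpleGraph (Fin (n + 1)) => G.Connected),
      (-1 : ℝ) ^ (Nat.card G.edgeSet) * (volume (graphPolytope n G)).toReal
      = (-1) ^ n * (n + 1 : ℝ) ^ n := by
  calc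
    _ = ∫ y : Fin n → ℝ, ∑ G with G.Connected ∧ G ≤ unitIntervalGraph (anchor y),
          (-1 : ℝ) ^ Nat.card G.edgeSet := sum_connected_mul_volume_graphPolytope _
    _ = ∫ y : Fin n → ℝ, (-1) ^ n * ∑ r, (parentChoices (anchor y) r : ℝ) := by
        refine integral_congr_ae ?_
        filter_upwards [ae_injective_anchor n] with y hy
        exact_mod_cast Fintype.card_fin (n + 1) ▸ sum_connected_le_unitIntervalGraph hy
    _ = (-1) ^ n * ∑ _r : Fin (n + 1), ∑ p : Fin n → Fin (n + 1), (1 - parentMatrix p).det := by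
        rw [integral_const_mul, integral_finsetSum _ fun r _ => integrable_parentChoices_anchor r]
        simp only [integral_parentChoices_anchor]
    _ = (-1) ^ n * (n + 1 : ℝ) ^ n := by
        rw [sum_const, card_univ, Fintype.card_fin, nsmul_eq_mul, Nat.cast_add_one,
          mul_sum_det_one_sub_parentMatrix]
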